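/- Fix integers n, m ≥ 1. For every pair (α, β) ∈ ℂ × ℂ with F^{(n)}(α,β) = 0 and G^{(m)}(α,β) = 0, the Jacobian determinant satisfies J(α,β) = F^{(n)}_x(α,β)·G^{(m)}_y(α,β) - F^{(n)}_y(α,β)·G^{(m)}_x(α,β) ≠ 0. Consequently, the curves F^{(n)} = 0 and G^{(m)} = 0 in ℂ² intersect transversally at every point of intersection, i.e., the ideal generated by F^{(n)}, G^{(m)}, and J in ℂ[x,y] is the unit ideal. -/

import Mathlib

/-! The proof is arithmetic, at the prime `3`. Modulo `3` the polynomial `f_{x,y}(z)` is `z^3 + y`,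
whose derivatives with respect to `z` and `x` vanish, so `F_x ≡ -1`, `G_x ≡ 1`, `F_y ≡ G_y ≡ 1`
and the Jacobian determinant is congruent to `-2 ≡ 1` in `ℤ[x,y]` (`three_dvd_jacobian_sub_one`).

It remains to see that the common zeros `(α, β)` are integral at `3`
(`integral_of_periodic_critical`). Take any valuation `v` of `ℂ` with `v 3 < 1`; one exists because
`3` is not a unit of `ℤ ⊆ ℂ`. A point `z` with `v z > 1`, `v z ≥ v α` and `v z ^ 3 > v β` escapes to
infinity, so it is not periodic. The critical values `β ± 2α^3` have difference and sum `4α^3` and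
`2β`, with `2` a `v`-unit, so one of them has absolute value at least `M = max (v α ^ 3) (v β)`.
If `M > 1`, that critical value escapes; hence `M ≤ 1` when both critical points are periodic.
Then `J(α, β)` is `1` plus an element of absolute value `< 1`, so it is nonzero. The ideal-theoretic
form follows from the Nullstellensatz. -/

noncomputable section

/-- The polynomial ring `ℤ[x,y]`, with `x = X 0` and `y = X 1`. -/
abbrev Rxy : Type := MvPolynomial (Fin 2) ℤ

/-- The element `x ∈ ℤ[x,y]`. -/
def xP : Rxy := MvPolynomial.X 0

/-- The element `y ∈ ℤ[x,y]`. -/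
def yP : Rxy := MvPolynomial.X 1

/-- `f_{x,y}(z) = z^3 - 3x^2 z + y`, as a polynomial in `z` with coefficients in `ℤ[x,y]`. -/
def fxy : Polynomial Rxy :=
  Polynomial.X ^ 3 - Polynomial.C (3 * xP ^ 2) * Polynomial.X + Polynomial.C yP

/-- The `n`-th iterate `f^n_{x,y}(z)` (in the variable `z`). -/
def fIter : ℕ → Polynomial Rxy
  | 0 => Polynomial.X
  | n + 1 => fxy.comp (fIter n)

/-- `F^(n)(x,y) = f^n_{x,y}(x) - x ∈ ℤ[x,y]`. -/
def F (n : ℕ) : Rxy := (fIter n).eval xP - xP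

/-- `G^(m)(x,y) = f^m_{x,y}(-x) + x ∈ ℤ[x,y]`. -/
def G (m : ℕ) : Rxy := (fIter m).eval (-xP) + xP

/-- The partial derivative `∂/∂x` on `ℤ[x,y]`. -/
def dx : Rxy → Rxy := MvPolynomial.pderiv 0

/-- The partial derivative `∂/∂y` on `ℤ[x,y]`. -/
def dy : Rxy → Rxy := MvPolynomial.pderiv 1

/-- `F^(n)` with coefficients mapped into `ℂ`, an element of `ℂ[x,y]`. -/
def Fc (n : ℕ) : MvPolynomial (Fin 2) ℂ := MvPolynomial.map (Int.castRingHom ℂ) (F n)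

/-- `G^(m)` with coefficients mapped into `ℂ`, an element of `ℂ[x,y]`. -/
def Gc (m : ℕ) : MvPolynomial (Fin 2) ℂ := MvPolynomial.map (Int.castRingHom ℂ) (G m)

/-- The Jacobian determinant `J = F^(n)_x·G^(m)_y - F^(n)_y·G^(m)_x` with coefficients
mapped into `ℂ`. -/
def Jc (n m : ℕ) : MvPolynomial (Fin 2) ℂ :=
  MvPolynomial.map (Int.castRingHom ℂ) (dx (F n) * dy (G m) - dy (F n) * dx (G m))

/-- The cubic map `z ↦ z^3 - 3a^2 z + b` on `ℂ`. -/
def cubic (a b z : ℂ) : ℂ := z ^ 3 - 3 * a ^ 2 * z + b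

section Valuation

variable {Γ : Type*} [LinearOrderedCommGroupWithZero Γ] (v : Valuation ℂ Γ)

/-- Outside the radius of escape the leading term of the cubic dominates. -/
lemma cubic_escape_step (h3 : v 3 < 1) {a b z : ℂ} (h1 : 1 < v z) (ha : v a ≤ v z)
    (hb : v b < v z ^ 3) : v z < v (cubic a b z) := by
  have hz : 0 < v z := zero_lt_one.trans h1
  have hlin : v (3 * a ^ 2 * z) < v (z ^ 3) := by
    rw [map_mul, map_mul, map_pow, map_pow]
    calc v 3 * v a ^ 2 * v z ≤ v 3 * v z ^ 2 * v z := by gcongr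
      _ = v 3 * v z ^ 3 := by rw [mul_assoc, pow_succ (v z) 2]
      _ < 1 * v z ^ 3 := mul_lt_mul_of_pos_right h3 (pow_pos hz 3)
      _ = v z ^ 3 := one_mul _
  have hv : v (cubic a b z) = v z ^ 3 := by
    have h2 : v (z ^ 3 - 3 * a ^ 2 * z) = v (z ^ 3) := v.map_sub_eq_of_lt_left hlin
    unfold cubic
    rw [v.map_add_eq_of_lt_left (by rwa [h2, map_pow]), h2, map_pow]
  rw [hv]
  exact lt_self_pow₀ h1 (by norm_num)

lemma cubic_escape_iterate (h3 : v 3 < 1) {a b z : ℂ} (h1 : 1 < v z) (ha : v a ≤ v z)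
    (hb : v b < v z ^ 3) (k : ℕ) : v z < v ((cubic a b)^[k + 1] z) := by
  induction k with
  | zero => exact cubic_escape_step v h3 h1 ha hb
  | succ k ih =>
    rw [Function.iterate_succ_apply']
    exact ih.trans (cubic_escape_step v h3 (h1.trans ih) (ha.trans ih.le)
      (hb.trans_le (pow_le_pow_left₀ zero_le ih.le 3)))

/-- A cycle does not meet the escape region. The hypothesis is stated for a critical value
`w = f(c)` of a periodic point `c`, because that is the point to which it is applied. -/
lemma not_escape_of_periodic (h3 : v 3 < 1) {a b c : ℂ} {n : ℕ} (hn : 1 ≤ n)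
    (hper : (cubic a b)^[n] c = c) (h1 : 1 < v (cubic a b c)) (ha : v a ≤ v (cubic a b c))
    (hb : v b ≤ v (cubic a b c)) : False := by
  obtain ⟨k, rfl⟩ := Nat.exists_eq_add_of_le' hn
  have h := cubic_escape_iterate v h3 h1 ha (hb.trans_lt (lt_self_pow₀ h1 (by norm_num))) k
  rw [← Function.iterate_succ_apply, Function.iterate_succ_apply', hper] at h
  exact lt_irrefl _ h

/-- If both critical points `±a` are periodic, then `a` and `b` are integral for every valuation
above `3`. -/
lemma integral_of_periodic_critical (h3 : v 3 < 1) {a b : ℂ} {n m : ℕ} (hn : 1 ≤ n) (hm : 1 ≤ m)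
    (hF : (cubic a b)^[n] a = a) (hG : (cubic a b)^[m] (-a) = -a) : v a ≤ 1 ∧ v b ≤ 1 := by
  have h2 : v 2 = 1 := by
    have h : v (3 - 1) = v 1 := v.map_sub_eq_of_lt_right (by rwa [map_one])
    norm_num at h
    exact h
  have h4 : v 4 = 1 := by
    rw [show (4 : ℂ) = 2 * 2 by norm_num, map_mul, h2, one_mul]
  set M := max (v a ^ 3) (v b) with hM
  have hsub : cubic a b (-a) - cubic a b a = 4 * a ^ 3 := by unfold cubic; ring
  have hadd : cubic a b (-a) + cubic a b a = 2 * b := by unfold cubic; ring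
  have hbig : M ≤ v (cubic a b a) ∨ M ≤ v (cubic a b (-a)) := by
    by_contra! h
    have e1 := v.map_sub_lt h.2 h.1
    have e2 := v.map_add_lt h.2 h.1
    rw [hsub, map_mul, h4, one_mul, map_pow] at e1
    rw [hadd, map_mul, h2, one_mul] at e2
    exact lt_irrefl _ (max_lt e1 e2)
  have hM1 : M ≤ 1 := by
    by_contra! h
    have haM : v a ≤ M := by
      rcases le_or_gt (v a) 1 with h' | h'
      · exact h'.trans h.le
      · exact (lt_self_pow₀ h' (by norm_num)).le.trans (le_max_left _ _)
    have hbM : v b ≤ M := le_max_right _ _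
    rcases hbig with hw | hw
    · exact not_escape_of_periodic v h3 hn hF (h.trans_le hw) (haM.trans hw) (hbM.trans hw)
    · exact not_escape_of_periodic v h3 hm hG (h.trans_le hw) (haM.trans hw) (hbM.trans hw)
  refine ⟨?_, (le_max_right _ _).trans hM1⟩
  exact (pow_le_one_iff_of_nonneg zero_le (by norm_num)).1 ((le_max_left _ _).trans hM1)

end Valuation

/-- There is a valuation ring of `ℂ` above the prime `3`. -/
lemma exists_valuationSubring_three : ∃ V : ValuationSubring ℂ, V.valuation 3 < 1 := by
  have hne : Ideal.span {(3 : (⊥ : Subring ℂ))} ≠ ⊤ := by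
    rw [Ne, Ideal.span_singleton_eq_top, isUnit_iff_exists_inv]
    rintro ⟨⟨c, hc⟩, h⟩
    obtain ⟨k, rfl⟩ := Subring.mem_bot.1 hc
    have h' : (3 : ℂ) * (k : ℂ) = 1 := congrArg Subtype.val h
    have h'' : (3 : ℤ) * k = 1 := by exact_mod_cast h'
    omega
  obtain ⟨V, -, hV⟩ := Ideal.image_subset_nonunits_valuationSubring _ hne
  exact ⟨V, (ValuationSubring.mem_nonunits_iff V).1
    (hV ⟨3, Ideal.subset_span rfl, rfl⟩)⟩

/-- Specialization of an integral polynomial in `x, y` at a complex point. -/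
def spec (a b : ℂ) : Rxy →+* ℂ :=
  (MvPolynomial.eval ![a, b]).comp (MvPolynomial.map (Int.castRingHom ℂ))

lemma spec_xP (a b : ℂ) : spec a b xP = a := by simp [spec, xP]

lemma spec_yP (a b : ℂ) : spec a b yP = b := by simp [spec, yP]

lemma eval_fIter_succ (p : Rxy) (k : ℕ) : (fIter (k + 1)).eval p =
    (fIter k).eval p ^ 3 - 3 * xP ^ 2 * (fIter k).eval p + yP := by
  simp [fIter, fxy]

lemma spec_eval_fIter (a b : ℂ) (p : Rxy) (k : ℕ) :
    spec a b ((fIter k).eval p) = (cubic a b)^[k] (spec a b p) := by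
  induction k with
  | zero => simp [fIter]
  | succ k ih =>
    rw [eval_fIter_succ, Function.iterate_succ_apply', ← ih]
    simp only [cubic, map_add, map_sub, map_mul, map_pow, map_ofNat, spec_xP, spec_yP]

/-- Modulo `3` a derivation takes the same value on `f^(k+1)(p)` as on `y`, since it kills the cube
and the multiple of `3` in `f`. -/
lemma three_dvd_derivation (D : Derivation ℤ Rxy Rxy) (p : Rxy) (k : ℕ) :
    (3 : Rxy) ∣ D ((fIter (k + 1)).eval p) - D yP := by
  rw [eval_fIter_succ]
  have h3 : D (3 : Rxy) = 0 := by exact_mod_cast D.map_natCast 3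
  refine ⟨(fIter k).eval p ^ 2 * D ((fIter k).eval p)
    - (xP ^ 2 * D ((fIter k).eval p) + (fIter k).eval p * (2 * xP * D xP)), ?_⟩
  simp only [map_add, map_sub, D.leibniz, D.leibniz_pow, h3, smul_eq_mul, nsmul_eq_mul]
  push_cast
  ring

lemma three_dvd_jacobian_sub_one {n m : ℕ} (hn : 1 ≤ n) (hm : 1 ≤ m) :
    (3 : Rxy) ∣ (dx (F n) * dy (G m) - dy (F n) * dx (G m)) - 1 := by
  obtain ⟨n, rfl⟩ := Nat.exists_eq_add_of_le' hn
  obtain ⟨m, rfl⟩ := Nat.exists_eq_add_of_le' hm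
  have hxx : dx xP = 1 := by simp [dx, xP]
  have hxy : dx yP = 0 := by simp [dx, yP]
  have hyx : dy xP = 0 := by simp [dy, xP]
  have hyy : dy yP = 1 := by simp [dy, yP]
  obtain ⟨a, ha⟩ := three_dvd_derivation (MvPolynomial.pderiv 0) xP n
  obtain ⟨b, hb⟩ := three_dvd_derivation (MvPolynomial.pderiv 1) xP n
  obtain ⟨c, hc⟩ := three_dvd_derivation (MvPolynomial.pderiv 0) (-xP) m
  obtain ⟨d, hd⟩ := three_dvd_derivation (MvPolynomial.pderiv 1) (-xP) m
  change dx _ - dx yP = _ at ha hc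
  change dy _ - dy yP = _ at hb hd
  rw [hxy, sub_zero] at ha hc
  rw [hyy, sub_eq_iff_eq_add] at hb hd
  have hFx : dx (F (n + 1)) = 3 * a - 1 := by rw [← ha, ← hxx]; exact map_sub _ _ _
  have hFy : dy (F (n + 1)) = 3 * b + 1 := by
    rw [← hb, ← sub_zero (dy (Polynomial.eval _ _)), ← hyx]; exact map_sub _ _ _
  have hGx : dx (G (m + 1)) = 3 * c + 1 := by rw [← hc, ← hxx]; exact map_add _ _ _
  have hGy : dy (G (m + 1)) = 3 * d + 1 := by
    rw [← hd, ← add_zero (dy (Polynomial.eval _ _)), ← hyx]; exact map_add _ _ _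
  rw [hFx, hFy, hGx, hGy]
  exact ⟨3 * a * d + a - d - 3 * b * c - b - c - 1, by ring⟩

lemma spec_mem (V : ValuationSubring ℂ) {a b : ℂ} (ha : a ∈ V) (hb : b ∈ V) (p : Rxy) :
    spec a b p ∈ V := by
  induction p using MvPolynomial.induction_on with
  | C k => simp [spec]
  | add p q hp hq => rw [map_add]; exact add_mem hp hq
  | mul_X p i hp =>
    rw [map_mul]
    refine mul_mem hp ?_
    fin_cases i <;> simpa [spec]

lemma jacobian_ne_zero {n m : ℕ} (hn : 1 ≤ n) (hm : 1 ≤ m) (α β : ℂ)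
    (hF : spec α β (F n) = 0) (hG : spec α β (G m) = 0) :
    spec α β (dx (F n) * dy (G m) - dy (F n) * dx (G m)) ≠ 0 := by
  obtain ⟨V, hV⟩ := exists_valuationSubring_three
  rw [F, map_sub, spec_eval_fIter, spec_xP, sub_eq_zero] at hF
  rw [G, map_add, spec_eval_fIter, map_neg, spec_xP, ← sub_neg_eq_add, sub_eq_zero] at hG
  obtain ⟨ha, hb⟩ := integral_of_periodic_critical V.valuation hV hn hm hF hG
  rw [V.valuation_le_one_iff] at ha hb
  obtain ⟨q, hq⟩ := three_dvd_jacobian_sub_one hn hm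
  intro h0
  -- A vanishing Jacobian would give `-1 = 3 q(α, β)` with `q(α, β)` integral.
  have h := congrArg (spec α β) hq
  rw [map_sub, h0, map_one, map_mul, map_ofNat] at h
  have hv : V.valuation (3 * spec α β q) < 1 := by
    rw [map_mul]
    exact mul_lt_one_of_lt_of_le hV ((V.valuation_le_one_iff _).2 (spec_mem V ha hb q))
  rw [← h, zero_sub, Valuation.map_neg, map_one] at hv
  exact lt_irrefl _ hv

/-- Thurston rigidity for cubic polynomials, algebraic form. Fix `n, m ≥ 1`. At every common
zero `(α,β) ∈ ℂ²` of `F^(n)` and `G^(m)`, the Jacobian determinant `J(α,β)` is nonzero;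
consequently the curves `F^(n) = 0` and `G^(m) = 0` intersect transversally at every
intersection point, i.e. the ideal `(F^(n), G^(m), J)` of `ℂ[x,y]` is the unit ideal. -/
theorem thurston_rigidity_cubic (n m : ℕ) (hn : 1 ≤ n) (hm : 1 ≤ m) :
    (∀ α β : ℂ, MvPolynomial.eval ![α, β] (Fc n) = 0 →
        MvPolynomial.eval ![α, β] (Gc m) = 0 →
          MvPolynomial.eval ![α, β] (Jc n m) ≠ 0) ∧
      Ideal.span {Fc n, Gc m, Jc n m} = (⊤ : Ideal (MvPolynomial (Fin 2) ℂ)) := by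
  have main : ∀ α β : ℂ, MvPolynomial.eval ![α, β] (Fc n) = 0 →
      MvPolynomial.eval ![α, β] (Gc m) = 0 → MvPolynomial.eval ![α, β] (Jc n m) ≠ 0 :=
    fun α β hF hG => jacobian_ne_zero hn hm α β hF hG
  refine ⟨main, ?_⟩
  by_contra hne
  obtain ⟨I, hI, hle⟩ := Ideal.exists_le_maximal _ hne
  obtain ⟨p, rfl⟩ := MvPolynomial.isMaximal_iff_eq_vanishingIdeal_singleton.1 hI
  have hp : p = ![p 0, p 1] := by ext i; fin_cases i <;> rfl
  have hzero : ∀ q ∈ ({Fc n, Gc m, Jc n m} : Set (MvPolynomial (Fin 2) ℂ)),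
      MvPolynomial.eval ![p 0, p 1] q = 0 := by
    intro q hq
    rw [← hp, ← MvPolynomial.coe_aeval_eq_eval]
    exact (MvPolynomial.mem_vanishingIdeal_singleton_iff p q).1 (hle (Ideal.subset_span hq))
  exact main _ _ (hzero _ (by simp)) (hzero _ (by simp)) (hzero _ (by simp))
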